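/- For every integer N, one has E[#(S_z(−N−b) ∩ [−y,−1])] = σ_z·y exactly, and there exist C > 0 and x₀ (depending only on δ, M, K, ξ) such that for all x ≥ x₀ and all integers N, |E[(#(S_z(−N−b) ∩ [−y,−1]))²] − (σ_z y)²| ≤ C·(σ_z y)²/ln y, where y and z are as in the setup. -/

import Mathlib

open scoped Classical

noncomputable def yy (δ x : ℝ) : ℕ := ⌈x * Real.log x ^ δ⌉₊

noncomputable def zz (δ x : ℝ) : ℝ :=
  (yy δ x : ℝ) * Real.log (Real.log x) ^ 2 / Real.log x ^ (1/2 : ℝ)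

noncomputable def primesUpTo (t : ℝ) : Finset ℕ :=
  (Finset.range (⌊t⌋₊ + 1)).filter fun p => p.Prime ∧ (p : ℝ) ≤ t

noncomputable def PP (t : ℝ) : ℕ := ∏ p ∈ primesUpTo t, p

noncomputable def sigUpTo (t : ℝ) : ℝ := ∏ p ∈ primesUpTo t, (1 - 1 / (p : ℝ))

noncomputable def primesBetween (w t : ℝ) : Finset ℕ :=
  (Finset.range (⌊t⌋₊ + 1)).filter fun p => p.Prime ∧ w < (p : ℝ) ∧ (p : ℝ) ≤ t

noncomputable def sigBetween (w t : ℝ) : ℝ := ∏ p ∈ primesBetween w t, (1 - 1 / (p : ℝ))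

def inS (t : ℝ) (b n : ℤ) : Prop :=
  ∀ p : ℕ, p.Prime → (p : ℝ) ≤ t → ¬ ((p : ℤ) ∣ (n - b))

def inSBetween (w t : ℝ) (b n : ℤ) : Prop :=
  ∀ p : ℕ, p.Prime → w < (p : ℝ) → (p : ℝ) ≤ t → ¬ ((p : ℤ) ∣ (n - b))

noncomputable def countS (t : ℝ) (b lo hi : ℤ) : ℕ :=
  ((Finset.Icc lo hi).filter (inS t b)).card

noncomputable def EE (δ x : ℝ) (g : ℤ → ℝ) : ℝ :=
  (1 / (PP (zz δ x) : ℝ)) * ∑ b ∈ Finset.range (PP (zz δ x)), g (b : ℤ)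

def frakH (δ ξ x : ℝ) : Set ℝ :=
  {H | ∃ j : ℕ, H = ξ ^ j ∧ 2 * (yy δ x : ℝ) / x ≤ H ∧ H ≤ (yy δ x : ℝ) / (ξ * zz δ x)}

def frakH1 (δ ξ x : ℝ) : Set ℝ :=
  {H | ∃ j : ℕ, Even j ∧ H = ξ ^ j ∧ 2 * (yy δ x : ℝ) / x ≤ H ∧ H ≤ (yy δ x : ℝ) / (ξ * zz δ x)}

def frakH2 (δ ξ x : ℝ) : Set ℝ :=
  {H | ∃ j : ℕ, Odd j ∧ H = ξ ^ j ∧ 2 * (yy δ x : ℝ) / x ≤ H ∧ H ≤ (yy δ x : ℝ) / (ξ * zz δ x)}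

noncomputable def QH (δ ξ x H : ℝ) : Finset ℕ :=
  (Finset.range (⌊(yy δ x : ℝ) / H⌋₊ + 1)).filter fun q =>
    q.Prime ∧ (yy δ x : ℝ) / (ξ * H) < (q : ℝ) ∧ (q : ℝ) ≤ (yy δ x : ℝ) / H

noncomputable def Hq (δ ξ x : ℝ) (q : ℕ) : ℝ :=
  if h : ∃ H ∈ frakH δ ξ x, (yy δ x : ℝ) / (ξ * H) < (q : ℝ) ∧ (q : ℝ) ≤ (yy δ x : ℝ) / H
  then h.choose else 1

noncomputable def APset (M : ℝ) (K : ℕ) (b : ℤ) (H : ℝ) (q : ℕ) (n : ℤ) : Finset ℤ :=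
  ((Finset.Icc 1 ⌊(K : ℝ) * H⌋₊).image fun h : ℕ => n + (q : ℤ) * (h : ℤ)).filter (inS (H ^ M) b)

noncomputable def lam (M zv : ℝ) (K : ℕ) (b : ℤ) (H : ℝ) (q : ℕ) (n : ℤ) : ℝ :=
  if ∀ m ∈ APset M K b H q n, inSBetween (H ^ M) zv b m
  then sigBetween (H ^ M) zv ^ (-((APset M K b H q n).card : ℤ))
  else 0

noncomputable def APsetStar (M : ℝ) (K : ℕ) (N b : ℤ) (H : ℝ) (q : ℕ) (n : ℤ) : Finset ℤ :=
  ((Finset.Icc 1 ⌊(K : ℝ) * H⌋₊).image fun h : ℕ => n - (q : ℤ) * (h : ℤ)).filter (inS (H ^ M) (-N - b))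

noncomputable def lamStar (M zv : ℝ) (K : ℕ) (N b : ℤ) (H : ℝ) (q : ℕ) (n : ℤ) : ℝ :=
  if ∀ m ∈ APsetStar M K N b H q n, inSBetween (H ^ M) zv (-N - b) m
  then sigBetween (H ^ M) zv ^ (-((APsetStar M K N b H q n).card : ℤ))
  else 0

/-!
Whether `n + b` survives the sieve depends on `b` modulo each prime separately, so by the Chinese
remainder theorem averages over `b` factor over the primes. The mean is then immediate, and the
second moment becomes a sum over pairs `(n, m)` of `∏ p, (1[p ∣ n - m] / p + (1 - 2 / p))`.
Replacing the indicators by their densities `1 / p` turns this product into `σ ^ 2`. Expanding over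
sets `D` of primes, the replacement costs at most `1` per `D` when summed over `m` in an interval,
hence at most `∏ p, (1 / p + (1 - 2 / p)) = σ` in all. The variance is therefore at most the mean
`σ y`, and any lower bound `σ y ≫ log y` suffices; `σ y ≫ √y` already follows from all primes but
`2` being odd.
-/

section SieveMoments

open Finset Filter
open scoped BigOperators

theorem expect_range_mul_of_coprime {R : Type*} [CommSemiring R] [Algebra ℚ≥0 R] {m n : ℕ}
    (hmn : m.Coprime n) {f g : ℕ → R} (hf : Function.Periodic f m) (hg : Function.Periodic g n) :
    𝔼 b ∈ range (m * n), f b * g b = (𝔼 b ∈ range m, f b) * 𝔼 b ∈ range n, g b := by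
  rcases m.eq_zero_or_pos with rfl | hm
  · simp
  rcases n.eq_zero_or_pos with rfl | hn
  · simp
  rw [expect_mul_expect, ← expect_product']
  refine expect_nbij (fun b ↦ (b % m, b % n)) ?maps ?eq ?inj ?surj
  case maps => exact fun b _ ↦ by simp [Nat.mod_lt, hm, hn]
  case eq => exact fun b _ ↦ by rw [hf.map_mod_nat, hg.map_mod_nat]
  case inj =>
    intro a ha b hb hab
    exact Nat.ModEq.eq_of_lt_of_lt
      ((Nat.modEq_and_modEq_iff_modEq_mul hmn).1 (Prod.mk.inj hab))
      (by simpa using ha) (by simpa using hb)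
  case surj =>
    rintro ⟨i, j⟩ hij
    obtain ⟨hi, hj⟩ : i < m ∧ j < n := by simpa using hij
    obtain ⟨k, hki, hkj⟩ := Nat.chineseRemainder hmn i j
    refine ⟨k % (m * n), by simpa using Nat.mod_lt k (Nat.mul_pos hm hn), ?_⟩
    simp only [Nat.mod_mul_right_mod, Nat.mod_mul_left_mod]
    exact Prod.ext (Nat.mod_eq_of_modEq hki hi) (Nat.mod_eq_of_modEq hkj hj)

theorem expect_range_prod_of_pairwise_coprime {R : Type*} [CommSemiring R] [Algebra ℚ≥0 R]
    {ι : Type*} {s : Finset ι} {m : ι → ℕ} {f : ι → ℕ → R}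
    (hm : (s : Set ι).Pairwise (Function.onFun Nat.Coprime m))
    (hf : ∀ i ∈ s, Function.Periodic (f i) (m i)) :
    𝔼 b ∈ range (∏ i ∈ s, m i), ∏ i ∈ s, f i b = ∏ i ∈ s, 𝔼 b ∈ range (m i), f i b := by
  induction s using Finset.cons_induction with
  | empty => simp
  | cons i s hi ih =>
    simp only [prod_cons, forall_mem_cons, coe_cons] at hm hf ⊢
    have hcoprime : (m i).Coprime (∏ j ∈ s, m j) := Nat.Coprime.prod_right fun j hj ↦
      hm (Set.mem_insert i _) (Set.mem_insert_of_mem i hj) (ne_of_mem_of_not_mem hj hi).symm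
    have hperiodic : Function.Periodic (fun b ↦ ∏ j ∈ s, f j b) (∏ j ∈ s, m j) := fun b ↦
      prod_congr rfl fun j hj ↦ by
        obtain ⟨k, hk⟩ := dvd_prod_of_mem m hj
        rw [hk, mul_comm]
        exact (hf.2 j hj).nat_mul k b
    rw [expect_range_mul_of_coprime hcoprime hf.1 hperiodic,
      ih (hm.mono (Set.subset_insert i _)) hf.2]

/-- The indicator function of the multiples of `d`, with real values so that it can be averaged. -/
noncomputable def dvdIndicator (d : ℕ) (a : ℤ) : ℝ := if (d : ℤ) ∣ a then 1 else 0

theorem periodic_one_sub_dvdIndicator (d : ℕ) (a : ℤ) :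
    Function.Periodic (fun b : ℕ ↦ 1 - dvdIndicator d (a + b)) d := fun b ↦ by
  simp only [dvdIndicator, Nat.cast_add, ← add_assoc, dvd_add_self_right]

theorem dvdIndicator_mul_dvdIndicator (d : ℕ) (a b : ℤ) :
    dvdIndicator d a * dvdIndicator d b = dvdIndicator d (a - b) * dvdIndicator d a := by
  by_cases h : (d : ℤ) ∣ a
  · simp only [dvdIndicator, dvd_sub_right h, mul_comm]
  · simp [dvdIndicator, h]

theorem prod_dvdIndicator {D : Finset ℕ} (hD : (D : Set ℕ).Pairwise Nat.Coprime) (a : ℤ) :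
    ∏ d ∈ D, dvdIndicator d a = dvdIndicator (∏ d ∈ D, d) a := by
  have hdvd : (∀ d ∈ D, (d : ℤ) ∣ a) ↔ ((∏ d ∈ D, d : ℕ) : ℤ) ∣ a := by
    push_cast
    exact ⟨prod_dvd_of_coprime fun d hd e he hde ↦ Nat.isCoprime_iff_coprime.2 (hD hd he hde),
      fun h d hd ↦ (dvd_prod_of_mem (fun d : ℕ ↦ (d : ℤ)) hd).trans h⟩
  simp only [dvdIndicator, prod_ite_zero, prod_const_one, hdvd]

theorem expect_range_dvdIndicator {d : ℕ} (hd : 0 < d) (a : ℤ) :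
    𝔼 b ∈ range d, dvdIndicator d (a + b) = 1 / d := by
  have hd' : (0 : ℤ) < d := by exact_mod_cast hd
  have hresidue : ∀ b ∈ range d, (d : ℤ) ∣ a + b ↔ b = (-a % d).toNat := fun b hb ↦ by
    have hb' : (b : ℤ) % d = b := Int.emod_eq_of_lt b.cast_nonneg (by simpa using hb)
    have hmod : (d : ℤ) ∣ a + b ↔ -a % d = b := by
      rw [← hb', ← Int.ModEq, Int.modEq_iff_dvd, hb', sub_neg_eq_add, add_comm]
    have := Int.emod_nonneg (-a) hd'.ne'
    omega
  have hmem : (-a % d).toNat ∈ range d := by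
    have := Int.emod_lt_of_pos (-a) hd'
    rw [mem_range]
    omega
  have hsum : ∑ b ∈ range d, dvdIndicator d (a + b) = 1 := by
    simp only [dvdIndicator]
    rw [sum_congr rfl fun b hb ↦ by rw [if_congr (hresidue b hb) rfl rfl], sum_ite_eq', if_pos hmem]
  rw [expect_eq_sum_div_card, hsum, card_range]

theorem expect_range_one_sub_dvdIndicator {d : ℕ} (hd : 0 < d) (a : ℤ) :
    𝔼 b ∈ range d, (1 - dvdIndicator d (a + b)) = 1 - 1 / d := by
  rw [expect_sub_distrib, expect_range_dvdIndicator hd,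
    expect_const (nonempty_range_iff.2 hd.ne')]

theorem expect_range_one_sub_dvdIndicator_mul {d : ℕ} (hd : 0 < d) (a c : ℤ) :
    𝔼 b ∈ range d, (1 - dvdIndicator d (a + b)) * (1 - dvdIndicator d (c + b)) =
      1 / d * dvdIndicator d (a - c) + (1 - 2 / d) := by
  have hexpand : ∀ b : ℕ, (1 - dvdIndicator d (a + b)) * (1 - dvdIndicator d (c + b)) =
      1 - dvdIndicator d (a + b) - dvdIndicator d (c + b) +
        dvdIndicator d (a - c) * dvdIndicator d (a + b) := fun b ↦ by
    rw [← add_sub_add_right_eq_sub a c (b : ℤ), ← dvdIndicator_mul_dvdIndicator]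
    ring
  simp only [hexpand, expect_add_distrib, expect_sub_distrib, ← mul_expect,
    expect_range_dvdIndicator hd, expect_const (nonempty_range_iff.2 hd.ne')]
  ring

theorem abs_card_Ioc_filter_modEq_sub_le {a b r : ℤ} (hab : a ≤ b) (hr : 0 < r) (v : ℤ) :
    |(#{x ∈ Ioc a b | x ≡ v [ZMOD r]} : ℝ) - (b - a) / r| ≤ 1 := by
  have hr' : (0 : ℚ) < r := by exact_mod_cast hr
  have hle : (a - v) / (r : ℚ) ≤ (b - v) / r :=
    div_le_div_of_nonneg_right (by exact_mod_cast sub_le_sub_right hab v) hr'.le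
  have hlen : ((b : ℚ) - a) / r = (b - v) / r - (a - v) / r := by ring
  have hcard : (#{x ∈ Ioc a b | x ≡ v [ZMOD r]} : ℚ) =
      ⌊(b - v) / (r : ℚ)⌋ - ⌊(a - v) / (r : ℚ)⌋ := by
    exact_mod_cast (Int.Ioc_filter_modEq_card a b hr v).trans
      (max_eq_left (sub_nonneg.2 (Int.floor_le_floor hle)))
  have habs : |(#{x ∈ Ioc a b | x ≡ v [ZMOD r]} : ℚ) - (b - a) / r| ≤ 1 := by
    rw [hcard, hlen, abs_le]
    constructor <;> linarith [Int.floor_le ((a - v) / (r : ℚ)), Int.floor_le ((b - v) / (r : ℚ)),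
      Int.lt_floor_add_one ((a - v) / (r : ℚ)), Int.lt_floor_add_one ((b - v) / (r : ℚ))]
  simpa using (Rat.cast_le (K := ℝ)).2 habs

theorem abs_sum_dvdIndicator_sub_le {d : ℕ} (hd : 0 < d) (lo hi n : ℤ) :
    |∑ m ∈ Icc lo hi, dvdIndicator d (n - m) - #(Icc lo hi) / d| ≤ 1 := by
  rcases lt_or_ge hi lo with h | h
  · simp [Icc_eq_empty_of_lt h]
  have hIcc : Icc lo hi = Ioc (lo - 1) hi := by
    ext m
    simp only [mem_Icc, mem_Ioc, Int.sub_one_lt_iff]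
  have hsum : ∑ m ∈ Icc lo hi, dvdIndicator d (n - m) =
      #{m ∈ Ioc (lo - 1) hi | m ≡ n [ZMOD d]} := by
    simp only [dvdIndicator, sum_boole, hIcc, Int.modEq_iff_dvd]
  have hcard : (#(Icc lo hi) : ℝ) = hi - (lo - 1 : ℤ) := by
    exact_mod_cast (by rw [Int.card_Icc_of_le lo hi (by omega)]; ring :
      (#(Icc lo hi) : ℤ) = hi - (lo - 1))
  rw [hsum, hcard]
  exact_mod_cast abs_card_Ioc_filter_modEq_sub_le (by omega) (Int.natCast_pos.2 hd) n

theorem abs_sum_prod_mul_add_sub_le {R ι α : Type*} [CommRing R] [LinearOrder R]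
    [IsStrictOrderedRing R] {Q : Finset ι} {s : Finset α} {a b c : ι → R} {f : ι → α → R} {A E : R}
    (ha : ∀ i ∈ Q, 0 ≤ a i) (hb : ∀ i ∈ Q, 0 ≤ b i)
    (h : ∀ D ⊆ Q, |∑ x ∈ s, ∏ i ∈ D, f i x - A * ∏ i ∈ D, c i| ≤ E) :
    |∑ x ∈ s, ∏ i ∈ Q, (a i * f i x + b i) - A * ∏ i ∈ Q, (a i * c i + b i)| ≤
      E * ∏ i ∈ Q, (a i + b i) := by
  classical
  set w : Finset ι → R := fun D ↦ (∏ i ∈ D, a i) * ∏ i ∈ Q \ D, b i with hw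
  have hw_nonneg : ∀ D ∈ Q.powerset, 0 ≤ w D := fun D hD ↦
    mul_nonneg (prod_nonneg fun i hi ↦ ha i (mem_powerset.1 hD hi))
      (prod_nonneg fun i hi ↦ hb i (mem_sdiff.1 hi).1)
  have hexpand : ∀ g : ι → R,
      ∏ i ∈ Q, (a i * g i + b i) = ∑ D ∈ Q.powerset, w D * ∏ i ∈ D, g i := fun g ↦ by
    simp only [prod_add, prod_mul_distrib, hw, mul_right_comm]
  calc |∑ x ∈ s, ∏ i ∈ Q, (a i * f i x + b i) - A * ∏ i ∈ Q, (a i * c i + b i)|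
      = |∑ D ∈ Q.powerset, w D * (∑ x ∈ s, ∏ i ∈ D, f i x - A * ∏ i ∈ D, c i)| := by
        simp only [hexpand, mul_sub, sum_sub_distrib, mul_sum, mul_left_comm A]
        rw [sum_comm]
    _ ≤ ∑ D ∈ Q.powerset, |w D * (∑ x ∈ s, ∏ i ∈ D, f i x - A * ∏ i ∈ D, c i)| :=
        abs_sum_le_sum_abs _ _
    _ ≤ ∑ D ∈ Q.powerset, E * w D := sum_le_sum fun D hD ↦ by
        rw [abs_mul, abs_of_nonneg (hw_nonneg D hD), mul_comm]
        exact mul_le_mul_of_nonneg_right (h D (mem_powerset.1 hD)) (hw_nonneg D hD)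
    _ = E * ∏ i ∈ Q, (a i + b i) := by rw [← mul_sum, prod_add]

/-- The density of the integers with no divisor in `Q`, for pairwise coprime `Q`; the `σ_t` of the
theorem is the case of the primes up to `t`. -/
noncomputable def sieveDensity (Q : Finset ℕ) : ℝ := ∏ q ∈ Q, (1 - 1 / (q : ℝ))

theorem sieveDensity_nonneg (Q : Finset ℕ) : 0 ≤ sieveDensity Q :=
  prod_nonneg fun q _ ↦ Nat.one_sub_one_div_cast_nonneg q

theorem antitone_sieveDensity : Antitone sieveDensity :=
  prod_anti_set_of_le_one Nat.one_sub_one_div_cast_nonneg Nat.one_sub_one_div_cast_le_one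

/-- The number of `n ∈ I` for which `n + b` has no divisor in `Q`, the random variable of the
theorem when `b` is a uniform residue modulo `∏ q ∈ Q, q`. -/
noncomputable def siftedCount (Q : Finset ℕ) (I : Finset ℤ) (b : ℤ) : ℕ :=
  #{n ∈ I | ∀ q ∈ Q, ¬ (q : ℤ) ∣ n + b}

/-- The density of the `b` for which neither `n + b` nor `m + b` has a divisor in `Q`, for pairwise
coprime `Q`, as a function of `h = n - m`. -/
noncomputable def pairDensity (Q : Finset ℕ) (h : ℤ) : ℝ :=
  ∏ q ∈ Q, (1 / (q : ℝ) * dvdIndicator q h + (1 - 2 / q))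

theorem siftedCount_eq_sum (Q : Finset ℕ) (I : Finset ℤ) (b : ℤ) :
    (siftedCount Q I b : ℝ) = ∑ n ∈ I, ∏ q ∈ Q, (1 - dvdIndicator q (n + b)) := by
  have hone_sub : ∀ (q : ℕ) (a : ℤ),
      1 - dvdIndicator q a = if ¬ (q : ℤ) ∣ a then 1 else 0 := fun q a ↦ by
    by_cases h : (q : ℤ) ∣ a <;> simp [dvdIndicator, h]
  simp only [hone_sub, prod_ite_zero, prod_const_one, sum_boole, siftedCount]

theorem expect_siftedCount {Q : Finset ℕ} (hQ : (Q : Set ℕ).Pairwise Nat.Coprime)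
    (hpos : ∀ q ∈ Q, 0 < q) (I : Finset ℤ) (a : ℤ) :
    𝔼 b ∈ range (∏ q ∈ Q, q), (siftedCount Q I (a + b) : ℝ) = sieveDensity Q * #I := by
  have hdensity : ∀ n : ℤ, 𝔼 b ∈ range (∏ q ∈ Q, q),
      ∏ q ∈ Q, (1 - dvdIndicator q (n + (a + b))) = sieveDensity Q := fun n ↦ by
    simp only [← add_assoc n a]
    rw [expect_range_prod_of_pairwise_coprime (m := fun q ↦ q) hQ fun q _ ↦
      periodic_one_sub_dvdIndicator q (n + a)]
    exact prod_congr rfl fun q hq ↦ expect_range_one_sub_dvdIndicator (hpos q hq) (n + a)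
  simp only [siftedCount_eq_sum, expect_sum_comm, hdensity, sum_const, nsmul_eq_mul, mul_comm]

theorem expect_siftedCount_sq {Q : Finset ℕ} (hQ : (Q : Set ℕ).Pairwise Nat.Coprime)
    (hpos : ∀ q ∈ Q, 0 < q) (I : Finset ℤ) (a : ℤ) :
    𝔼 b ∈ range (∏ q ∈ Q, q), (siftedCount Q I (a + b) : ℝ) ^ 2 =
      ∑ n ∈ I, ∑ m ∈ I, pairDensity Q (n - m) := by
  have hdensity : ∀ n m : ℤ, 𝔼 b ∈ range (∏ q ∈ Q, q),
      ∏ q ∈ Q, (1 - dvdIndicator q (n + (a + b))) * (1 - dvdIndicator q (m + (a + b))) =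
        pairDensity Q (n - m) := fun n m ↦ by
    simp only [← add_assoc _ a]
    refine (expect_range_prod_of_pairwise_coprime hQ fun q _ ↦
      (periodic_one_sub_dvdIndicator q (n + a)).mul
        (periodic_one_sub_dvdIndicator q (m + a))).trans (prod_congr rfl fun q hq ↦ ?_)
    simp only [Pi.mul_apply]
    rw [expect_range_one_sub_dvdIndicator_mul (hpos q hq), add_sub_add_right_eq_sub]
  simp only [siftedCount_eq_sum, sq, sum_mul_sum, ← prod_mul_distrib, expect_sum_comm, hdensity]

theorem abs_sum_pairDensity_sub_le {Q : Finset ℕ} (hQ : (Q : Set ℕ).Pairwise Nat.Coprime)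
    (hone_lt : ∀ q ∈ Q, 1 < q) (lo hi n : ℤ) :
    |∑ m ∈ Icc lo hi, pairDensity Q (n - m) - #(Icc lo hi) * sieveDensity Q ^ 2| ≤
      sieveDensity Q := by
  have herror : ∀ D ⊆ Q, |∑ m ∈ Icc lo hi, ∏ q ∈ D, dvdIndicator q (n - m) -
      #(Icc lo hi) * ∏ q ∈ D, 1 / (q : ℝ)| ≤ 1 := fun D hD ↦ by
    have hprod : ∏ q ∈ D, 1 / (q : ℝ) = 1 / (∏ q ∈ D, q : ℕ) := by
      simp only [one_div, prod_inv_distrib, Nat.cast_prod]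
    simp only [prod_dvdIndicator (hQ.mono (coe_subset.2 hD)), hprod, mul_one_div]
    exact abs_sum_dvdIndicator_sub_le
      (prod_pos fun q hq ↦ zero_lt_one.trans (hone_lt q (hD hq))) lo hi n
  have htwo : ∀ q ∈ Q, 0 ≤ 1 - 2 / (q : ℝ) := fun q hq ↦ by
    have : (2 : ℝ) ≤ q := by exact_mod_cast hone_lt q hq
    exact sub_nonneg.2 (div_le_one_of_le₀ this (by positivity))
  have hsq : ∏ q ∈ Q, (1 / (q : ℝ) * (1 / q) + (1 - 2 / q)) = sieveDensity Q ^ 2 := by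
    rw [sieveDensity, ← prod_pow]
    exact prod_congr rfl fun q _ ↦ by ring
  have hself : ∏ q ∈ Q, (1 / (q : ℝ) + (1 - 2 / q)) = sieveDensity Q :=
    prod_congr rfl fun q _ ↦ by ring
  simpa only [pairDensity, hsq, hself, one_mul] using
    abs_sum_prod_mul_add_sub_le (fun q _ ↦ Nat.one_div_cast_nonneg q) htwo herror

theorem abs_expect_siftedCount_sq_sub_le {Q : Finset ℕ} (hQ : (Q : Set ℕ).Pairwise Nat.Coprime)
    (hone_lt : ∀ q ∈ Q, 1 < q) (lo hi a : ℤ) :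
    |𝔼 b ∈ range (∏ q ∈ Q, q), (siftedCount Q (Icc lo hi) (a + b) : ℝ) ^ 2 -
      (sieveDensity Q * #(Icc lo hi)) ^ 2| ≤ sieveDensity Q * #(Icc lo hi) := by
  have hmain : (sieveDensity Q * #(Icc lo hi)) ^ 2 =
      ∑ _n ∈ Icc lo hi, #(Icc lo hi) * sieveDensity Q ^ 2 := by
    rw [sum_const, nsmul_eq_mul]
    ring
  have hbound : sieveDensity Q * #(Icc lo hi) = #(Icc lo hi) • sieveDensity Q := by
    rw [nsmul_eq_mul, mul_comm]
  rw [expect_siftedCount_sq hQ (fun q hq ↦ zero_lt_one.trans (hone_lt q hq)), hmain,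
    ← sum_sub_distrib, hbound]
  exact (abs_sum_le_sum_abs _ _).trans
    (sum_le_card_nsmul _ _ _ fun n _ ↦ abs_sum_pairDensity_sub_le hQ hone_lt lo hi n)

theorem one_div_le_sieveDensity_primesLE_sq (k : ℕ) :
    1 / (4 * (2 * k + 1) : ℝ) ≤ sieveDensity (Nat.primesLE (2 * k + 1)) ^ 2 := by
  rcases k.eq_zero_or_pos with rfl | hk
  · have h1 : Nat.primesLE (2 * 0 + 1) = ∅ := by decide
    rw [h1, sieveDensity, prod_empty]
    norm_num
  induction k, hk using Nat.le_induction with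
  | base =>
    have h3 : Nat.primesLE (2 * 1 + 1) = {2, 3} := by decide
    rw [h3, sieveDensity, prod_pair (by norm_num)]
    norm_num
  | succ k hk ih =>
    have hsubset : Nat.primesLE (2 * (k + 1) + 1) ⊆
        insert (2 * k + 3) (Nat.primesLE (2 * k + 1)) := fun p hp ↦ by
      obtain ⟨hle, hprime⟩ := Nat.mem_primesLE.1 hp
      have hodd : p % 2 = 1 ∨ p = 2 := hprime.eq_two_or_odd.symm
      rw [mem_insert, Nat.mem_primesLE]
      exact or_iff_not_imp_left.2 fun hne ↦ ⟨by omega, hprime⟩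
    have hinsert : sieveDensity (insert (2 * k + 3) (Nat.primesLE (2 * k + 1))) =
        (1 - 1 / (2 * k + 3)) * sieveDensity (Nat.primesLE (2 * k + 1)) := by
      rw [sieveDensity, prod_insert fun h ↦ by have := (Nat.mem_primesLE.1 h).1; omega]
      push_cast
      rfl
    have hfactor : (2 * k + 1 : ℝ) / (2 * k + 3) ≤ (1 - 1 / (2 * k + 3)) ^ 2 := by
      rw [one_sub_div (by positivity), div_pow, div_le_div_iff₀ (by positivity) (by positivity)]
      nlinarith
    calc 1 / (4 * (2 * (k + 1 : ℕ) + 1) : ℝ)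
        = (2 * k + 1) / (2 * k + 3) * (1 / (4 * (2 * k + 1))) := by
          push_cast
          field_simp
          ring
      _ ≤ (1 - 1 / (2 * k + 3)) ^ 2 * sieveDensity (Nat.primesLE (2 * k + 1)) ^ 2 := by gcongr
      _ = sieveDensity (insert (2 * k + 3) (Nat.primesLE (2 * k + 1))) ^ 2 := by
          rw [hinsert, mul_pow]
      _ ≤ sieveDensity (Nat.primesLE (2 * (k + 1) + 1)) ^ 2 :=
          pow_le_pow_left₀ (sieveDensity_nonneg _) (antitone_sieveDensity hsubset) 2

theorem sqrt_le_sieveDensity_primesLE_mul (n : ℕ) :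
    √(n : ℝ) ≤ 4 * (sieveDensity (Nat.primesLE n) * n) := by
  rcases n.eq_zero_or_pos with rfl | hn
  · simp
  have hσ := sieveDensity_nonneg (Nat.primesLE n)
  have hk : (2 * (n / 2 : ℕ) + 1 : ℝ) ≤ 2 * n := by
    exact_mod_cast (by omega : 2 * (n / 2) + 1 ≤ 2 * n)
  have hmono : Nat.primesLE n ⊆ Nat.primesLE (2 * (n / 2) + 1) := fun p hp ↦ by
    obtain ⟨hle, hprime⟩ := Nat.mem_primesLE.1 hp
    exact Nat.mem_primesLE.2 ⟨by omega, hprime⟩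
  have hsq : 1 / (8 * n : ℝ) ≤ sieveDensity (Nat.primesLE n) ^ 2 :=
    calc 1 / (8 * n : ℝ) ≤ 1 / (4 * (2 * (n / 2 : ℕ) + 1)) :=
          one_div_le_one_div_of_le (by positivity) (by linarith)
      _ ≤ sieveDensity (Nat.primesLE (2 * (n / 2) + 1)) ^ 2 :=
          one_div_le_sieveDensity_primesLE_sq _
      _ ≤ sieveDensity (Nat.primesLE n) ^ 2 :=
          pow_le_pow_left₀ (sieveDensity_nonneg _) (antitone_sieveDensity hmono) 2
  refine Real.sqrt_le_iff.2 ⟨by positivity, ?_⟩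
  have hpos : (0 : ℝ) < n := by positivity
  rw [div_le_iff₀ (by positivity)] at hsq
  nlinarith

theorem log_le_sieveDensity_primesLE_mul (n : ℕ) :
    Real.log n ≤ 8 * (sieveDensity (Nat.primesLE n) * n) := by
  have hlog : Real.log n ≤ √n / (1 / 2) := by
    simpa only [Real.sqrt_eq_rpow] using Real.log_le_rpow_div n.cast_nonneg one_half_pos
  linarith [sqrt_le_sieveDensity_primesLE_mul n]

theorem mem_primesUpTo {t : ℝ} {p : ℕ} : p ∈ primesUpTo t ↔ p.Prime ∧ (p : ℝ) ≤ t := by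
  simp only [primesUpTo, mem_filter, mem_range, and_iff_right_iff_imp]
  exact fun h ↦ Nat.lt_succ_of_le (Nat.le_floor h.2)

theorem pairwise_coprime_primesUpTo (t : ℝ) : (primesUpTo t : Set ℕ).Pairwise Nat.Coprime :=
  fun _ hp _ hq ↦ (Nat.coprime_primes (mem_primesUpTo.1 hp).1 (mem_primesUpTo.1 hq).1).2

theorem one_lt_of_mem_primesUpTo {t : ℝ} {p : ℕ} (hp : p ∈ primesUpTo t) : 1 < p :=
  (mem_primesUpTo.1 hp).1.one_lt

theorem primesUpTo_subset_primesLE {t : ℝ} {n : ℕ} (h : t ≤ n) :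
    primesUpTo t ⊆ Nat.primesLE n := fun p hp ↦ by
  obtain ⟨hprime, hpt⟩ := mem_primesUpTo.1 hp
  exact Nat.mem_primesLE.2 ⟨by exact_mod_cast hpt.trans h, hprime⟩

theorem sigUpTo_eq_sieveDensity (t : ℝ) : sigUpTo t = sieveDensity (primesUpTo t) := rfl

theorem countS_neg_sub_eq_siftedCount (t : ℝ) (a b lo hi : ℤ) :
    countS t (-a - b) lo hi = siftedCount (primesUpTo t) (Icc lo hi) (a + b) := by
  refine congrArg card (filter_congr fun n _ ↦ ?_)
  simp only [inS, mem_primesUpTo, and_imp, neg_sub_left, sub_neg_eq_add, add_comm b a]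

theorem EE_eq_expect (δ x : ℝ) (g : ℤ → ℝ) :
    EE δ x g = 𝔼 b ∈ range (∏ p ∈ primesUpTo (zz δ x), p), g b := by
  rw [EE, expect_eq_sum_div_card, card_range, one_div_mul_eq_div, PP]

theorem log_le_sigUpTo_mul {t : ℝ} {n : ℕ} (ht : t ≤ n) :
    Real.log n ≤ 8 * (sigUpTo t * n) := by
  refine (log_le_sieveDensity_primesLE_mul n).trans ?_
  rw [sigUpTo_eq_sieveDensity]
  gcongr
  exact antitone_sieveDensity (primesUpTo_subset_primesLE ht)

theorem eventually_zz_le_yy (δ : ℝ) : ∀ᶠ x in atTop, zz δ x ≤ yy δ x := by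
  have hlog_sq : ∀ᶠ u : ℝ in atTop, Real.log u ^ 2 ≤ u ^ (1 / 2 : ℝ) := by
    have hbound := (isLittleO_log_rpow_rpow_atTop 2 (one_half_pos (α := ℝ))).bound one_pos
    filter_upwards [hbound, eventually_ge_atTop 1] with u hu hu1
    simpa [abs_of_nonneg (Real.rpow_nonneg (zero_le_one.trans hu1) _)] using hu
  filter_upwards [Real.tendsto_log_atTop.eventually hlog_sq,
    Real.tendsto_log_atTop.eventually_gt_atTop 0] with x hx hx0
  rw [zz, mul_div_assoc]
  exact mul_le_of_le_one_right (by positivity) ((div_le_one (by positivity)).2 hx)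

theorem eventually_two_le_yy (δ : ℝ) : ∀ᶠ x in atTop, 2 ≤ yy δ x := by
  have hbound := (isLittleO_log_rpow_rpow_atTop (-δ) one_pos).bound one_half_pos
  filter_upwards [hbound, Real.tendsto_log_atTop.eventually_gt_atTop 0, eventually_gt_atTop 0]
    with x hx hlog hx0
  rw [Real.rpow_neg hlog.le, Real.rpow_one, Real.norm_of_nonneg (by positivity),
    Real.norm_of_nonneg hx0.le, inv_le_iff_one_le_mul₀ (by positivity)] at hx
  have htwo : (2 : ℝ) ≤ yy δ x := le_trans (by linarith) (Nat.le_ceil _)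
  exact_mod_cast htwo

theorem EE_countS (δ x : ℝ) (N lo hi : ℤ) :
    EE δ x (fun b ↦ countS (zz δ x) (-N - b) lo hi) = sigUpTo (zz δ x) * #(Icc lo hi) := by
  simp only [EE_eq_expect, countS_neg_sub_eq_siftedCount, sigUpTo_eq_sieveDensity]
  exact expect_siftedCount (pairwise_coprime_primesUpTo _)
    (fun p hp ↦ zero_lt_one.trans (one_lt_of_mem_primesUpTo hp)) _ N

theorem abs_EE_countS_sq_sub_le (δ x : ℝ) (N lo hi : ℤ) :
    |EE δ x (fun b ↦ (countS (zz δ x) (-N - b) lo hi : ℝ) ^ 2) -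
      (sigUpTo (zz δ x) * #(Icc lo hi)) ^ 2| ≤ sigUpTo (zz δ x) * #(Icc lo hi) := by
  simp only [EE_eq_expect, countS_neg_sub_eq_siftedCount, sigUpTo_eq_sieveDensity]
  exact abs_expect_siftedCount_sq_sub_le (pairwise_coprime_primesUpTo _)
    (fun p hp ↦ one_lt_of_mem_primesUpTo hp) lo hi N

theorem stmt2_general (δ : ℝ) :
    (∀ x : ℝ, ∀ N : ℤ,
      EE δ x (fun b ↦ countS (zz δ x) (-N - b) (-(yy δ x : ℤ)) (-1)) =
        sigUpTo (zz δ x) * yy δ x) ∧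
    ∀ᶠ x in atTop, ∀ N : ℤ,
      |EE δ x (fun b ↦ (countS (zz δ x) (-N - b) (-(yy δ x : ℤ)) (-1) : ℝ) ^ 2) -
          (sigUpTo (zz δ x) * yy δ x) ^ 2| ≤
        8 * (sigUpTo (zz δ x) * yy δ x) ^ 2 / Real.log (yy δ x) := by
  have hcard : ∀ y : ℕ, #(Icc (-(y : ℤ)) (-1)) = y := by simp
  refine ⟨fun x N ↦ by rw [EE_countS, hcard], ?_⟩
  filter_upwards [eventually_zz_le_yy δ, eventually_two_le_yy δ] with x hz hy N
  have hlog : 0 < Real.log (yy δ x) := Real.log_pos (by exact_mod_cast hy)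
  have hvariance := abs_EE_countS_sq_sub_le δ x N (-(yy δ x : ℤ)) (-1)
  rw [hcard] at hvariance
  have hmean : 0 ≤ sigUpTo (zz δ x) * yy δ x :=
    mul_nonneg (sieveDensity_nonneg _) (Nat.cast_nonneg _)
  refine hvariance.trans ((le_div_iff₀ hlog).2 ?_)
  nlinarith [mul_le_mul_of_nonneg_left (log_le_sigUpTo_mul hz) hmean]

end SieveMoments

theorem stmt2 (δ M : ℝ) (K : ℕ) (ξ : ℝ)
    (hδ0 : 0 < δ) (hδ1 : δ < 1/2) (hK : 2 ≤ K) (hξ : 1 < ξ) :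
    (∃ x₀ : ℝ, ∀ x ≥ x₀, ∀ N : ℤ,
      EE δ x (fun b => (countS (zz δ x) (-N - b) (-(yy δ x : ℤ)) (-1) : ℝ)) =
        sigUpTo (zz δ x) * (yy δ x)) ∧
    (∃ C : ℝ, 0 < C ∧ ∃ x₀ : ℝ, ∀ x ≥ x₀, ∀ N : ℤ,
      |EE δ x (fun b => ((countS (zz δ x) (-N - b) (-(yy δ x : ℤ)) (-1) : ℝ)) ^ 2) -
          (sigUpTo (zz δ x) * (yy δ x)) ^ 2| ≤
        C * (sigUpTo (zz δ x) * (yy δ x)) ^ 2 / Real.log (yy δ x)) := by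
  exact ⟨⟨0, fun x _ ↦ (stmt2_general δ).1 x⟩, 8, by norm_num,
    Filter.eventually_atTop.1 (stmt2_general δ).2⟩
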